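/- arXiv:2210.11620 — 3 statements merged into one kernel-verified Lean document; each statement's English description precedes it below -/
import Mathlib

section
/- Let E be a real normed space, C ≥ 2, and f : E → EuclideanSpace ℝ (Fin C) an L-Lipschitz map. Let x, x' ∈ E, let c be an index, and let m > 0 satisfy f(x)_c − f(x)_j ≥ m for every j ≠ c. If √2·L·‖x' − x‖ < m, then f(x')_c > f(x')_j for every j ≠ c; that is, the argmax prediction of f is unchanged for all perturbations of x of norm less than m/(√2·L). -/
open scoped NNReal

/-!
The functional `v ↦ v j - v c` on Euclidean space has norm at most `√2` when `j ≠ c`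
(`sub_coord_le_sqrt_two_mul_norm`). Applied to `v = f x' - f x`, whose norm is at most
`L * ‖x' - x‖`, it shows that the margin `f c - f j` drops by at most
`√2 * L * ‖x' - x‖ < m` between `x` and `x'`, so it stays positive.
-/

/-- Only the coordinates `i` and `j` enter, and `(a - b)² ≤ 2 (a² + b²)`; distinctness of
`i` and `j` ensures `a² + b²` is bounded by the squared norm. -/
theorem sub_coord_le_sqrt_two_mul_norm {C : ℕ} (v : EuclideanSpace ℝ (Fin C))
    {i j : Fin C} (hij : i ≠ j) : v i - v j ≤ Real.sqrt 2 * ‖v‖ := by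
  have hpair : v i ^ 2 + v j ^ 2 ≤ ‖v‖ ^ 2 := by
    rw [EuclideanSpace.real_norm_sq_eq, ← Finset.sum_pair (f := fun k => v k ^ 2) hij]
    exact Finset.sum_le_sum_of_subset_of_nonneg (Finset.subset_univ _)
      fun k _ _ => sq_nonneg (v k)
  refine (abs_le_of_sq_le_sq' ?_ (by positivity)).2
  rw [mul_pow, Real.sq_sqrt (by norm_num)]
  nlinarith [sq_nonneg (v i + v j)]

/-- **Certified radius of a Lipschitz classifier.** Let `E` be a real normed space,
`C ≥ 2`, and `f : E → EuclideanSpace ℝ (Fin C)` an `L`-Lipschitz map. Let `x x' : E`,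
`c` an index and `m > 0` with `f x c - f x j ≥ m` for every `j ≠ c`. If
`√2 * L * ‖x' - x‖ < m` then `f x' c > f x' j` for every `j ≠ c`, i.e. the argmax
prediction is unchanged for perturbations of norm less than `m / (√2 * L)`. -/
theorem lipschitz_certified_radius {E : Type*} [NormedAddCommGroup E] [NormedSpace ℝ E]
    {C : ℕ} (hC : 2 ≤ C) (L : ℝ≥0)
    (f : E → EuclideanSpace ℝ (Fin C)) (hf : LipschitzWith L f)
    (x x' : E) (c : Fin C) (m : ℝ) (hm : 0 < m)
    (hmargin : ∀ j, j ≠ c → m ≤ f x c - f x j)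
    (hrad : Real.sqrt 2 * L * ‖x' - x‖ < m) :
    ∀ j, j ≠ c → f x' j < f x' c := by
  intro j hj
  have hlip : ‖f x' - f x‖ ≤ L * ‖x' - x‖ := hf.norm_sub_le x' x
  have hdrop := sub_coord_le_sqrt_two_mul_norm (f x' - f x) hj
  have hscaled := mul_le_mul_of_nonneg_left hlip (Real.sqrt_nonneg 2)
  have hmj := hmargin j hj
  simp only [PiLp.sub_apply] at hdrop
  linarith
end

section
/- Let V be a real n×n matrix (n ≥ 1), A = V·Vᵀ, and let Y_k, Z_k be the Newton iterates and B_k the auxiliary sequence. Then for every k ∈ ℕ, Y_k = B_k·A and Z_k = B_k. -/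
/-!
Every `B k` is a polynomial in `A = V * Vᵀ`, hence commutes with `A` (`newtonB_commute`).
Given this, induction on `k` reduces both claims to identities in commuting variables:
with `Y = B A` and `Z = B` one has `Z Y = B² A`, so `(3 - Z Y) Z = 3 B - B³ A` and
`Y (3 - Z Y) = (3 B - B³ A) A`.
-/

open Matrix

/-- The Newton iterates `(Y k, Z k)` with `Y 0 = V * Vᵀ`, `Z 0 = 1`,
`Y (k+1) = ½ Y k (3I - Z k * Y k)`, `Z (k+1) = ½ (3I - Z k * Y k) Z k`. -/
noncomputable def newtonYZ {n : ℕ} (V : Matrix (Fin n) (Fin n) ℝ) :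
    ℕ → Matrix (Fin n) (Fin n) ℝ × Matrix (Fin n) (Fin n) ℝ
  | 0 => (V * Vᵀ, 1)
  | k + 1 =>
    ((1 / 2 : ℝ) • ((newtonYZ V k).1 * ((3 : Matrix (Fin n) (Fin n) ℝ) -
        (newtonYZ V k).2 * (newtonYZ V k).1)),
     (1 / 2 : ℝ) • (((3 : Matrix (Fin n) (Fin n) ℝ) -
        (newtonYZ V k).2 * (newtonYZ V k).1) * (newtonYZ V k).2))

/-- The auxiliary Newton sequence `B 0 = 1`, `B (k+1) = ½ (3 B k - (B k)³ * (V * Vᵀ))`. -/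
noncomputable def newtonB {n : ℕ} (V : Matrix (Fin n) (Fin n) ℝ) :
    ℕ → Matrix (Fin n) (Fin n) ℝ
  | 0 => 1
  | k + 1 => (1 / 2 : ℝ) • ((3 : ℝ) • newtonB V k - (newtonB V k) ^ 3 * (V * Vᵀ))

theorem newtonB_commute {n : ℕ} (V : Matrix (Fin n) (Fin n) ℝ) (k : ℕ) :
    Commute (newtonB V k) (V * Vᵀ) := by
  induction k with
  | zero => exact Commute.one_left _
  | succ k ih =>
    rw [newtonB]
    exact ((ih.smul_left _).sub_left ((ih.pow_left 3).mul_left (Commute.refl _))).smul_left _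

/-- For every `k`, `Y k = B k * A` and `Z k = B k`, where `A = V * Vᵀ`. -/
theorem newtonYZ_eq_newtonB {n : ℕ} (hn : 1 ≤ n) (V : Matrix (Fin n) (Fin n) ℝ) (k : ℕ) :
    (newtonYZ V k).1 = newtonB V k * (V * Vᵀ) ∧ (newtonYZ V k).2 = newtonB V k := by
  induction k with
  | zero => simp [newtonYZ, newtonB]
  | succ k ih =>
    obtain ⟨hY, hZ⟩ := ih
    have hc := (newtonB_commute V k).eq
    rw [newtonYZ, newtonB, hY, hZ]
    generalize newtonB V k = B at *
    generalize V * Vᵀ = A at *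
    have h3 : (3 : ℝ) • B = 3 * B := by
      rw [← Nat.cast_ofNat (R := ℝ), Nat.cast_smul_eq_nsmul, nsmul_eq_mul, Nat.cast_ofNat]
    have h3' : B * A * 3 = 3 * (B * A) := (Nat.cast_commute 3 (B * A)).eq.symm
    rw [h3]
    dsimp only
    constructor
    · rw [smul_mul_assoc, mul_sub, sub_mul, h3']
      congr 2
      · rw [mul_assoc 3]
      · calc B * A * (B * (B * A)) = B * (A * B) * (B * A) := by simp only [mul_assoc]
          _ = B * (B * A) * (B * A) := by rw [← hc]
          _ = B * B * (A * B) * A := by simp only [mul_assoc]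
          _ = B ^ 3 * A * A := by rw [← hc]; simp only [pow_succ, pow_zero, one_mul, mul_assoc]
    · rw [sub_mul]
      congr 2
      calc B * (B * A) * B = B * B * (A * B) := by simp only [mul_assoc]
        _ = B ^ 3 * A := by rw [← hc]; simp only [pow_succ, pow_zero, one_mul, mul_assoc]
end

section
/- Fix δ ∈ [0,1] and set S₁ = S_B^m(G;δ) ∩ M(G_pl) and S₂ = S_B^m(G;δ) ∩ (X ∖ M(G_pl)). Then L_m(G,G*|S₂) ≤ L_m(G,G*|S₁) + L_m(G,G_pl) − Err(G_pl) + R_B^m(G;δ). -/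
/-!
The inequality already holds pointwise under the integral sign. Write `ℓ(H)` for the integrand
`H (1 - G) + (1 - H) G`, which lies in `[0, 1]` for `{0,1}`-valued `H`, `S` for the consistency
set and `M = {Gpl ≠ Gstar}`. Then
`1_{S ∩ Mᶜ} ℓ(Gstar) ≤ 1_{S ∩ M} ℓ(Gstar) + ℓ(Gpl) - 1_M + 1_{Sᶜ}`:
on `S ∩ Mᶜ` both labelers agree, so the two sides are equal; on `S ∩ M` they are complementary, so
`ℓ(Gstar) + ℓ(Gpl) = 1`; and off `S` the right side is at least `ℓ(Gpl) ≥ 0`.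
-/

open MeasureTheory Set

/-- The set `ℬ(x) = {x' | ∃ T ∈ 𝒯, dist x' (T x) < r}` of points within distance `r`
of some transformation of `x`. -/
def transfBall {X : Type*} [MetricSpace X] (𝒯 : Set (X → X)) (r : ℝ) (x : X) : Set X :=
  {x' | ∃ T ∈ 𝒯, dist x' (T x) < r}

/-- The neighbourhood `𝒩(S) = {x' | ∃ x ∈ S, ℬ(x) ∩ ℬ(x') ≠ ∅}`. -/
def transfNbhd {X : Type*} [MetricSpace X] (𝒯 : Set (X → X)) (r : ℝ) (S : Set X) : Set X :=
  {x' | ∃ x ∈ S, (transfBall 𝒯 r x ∩ transfBall 𝒯 r x').Nonempty}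

/-- The subset loss `L_m(G, H | S) = ∫_S (H x (1 - G x) + (1 - H x) G x) dμ`. -/
noncomputable def subsetLoss {X : Type*} [MeasurableSpace X] (μ : Measure X)
    (G H : X → ℝ) (S : Set X) : ℝ :=
  ∫ x in S, (H x * (1 - G x) + (1 - H x) * G x) ∂μ

/-- The marginal consistency set `S_B^m(G; δ)`: points `x` such that for all
`x' ∈ ℬ(x)`, `G x ≥ (1 - δ) G x'` and `1 - G x ≥ (1 - δ)(1 - G x')`. -/
def consistSet {X : Type*} [MetricSpace X] (𝒯 : Set (X → X)) (r : ℝ)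
    (G : X → ℝ) (δ : ℝ) : Set X :=
  {x | ∀ x' ∈ transfBall 𝒯 r x,
    (1 - δ) * G x' ≤ G x ∧ (1 - δ) * (1 - G x') ≤ 1 - G x}

/-- The marginal consistency loss `R_B^m(G; δ) = μ(X ∖ S_B^m(G; δ))`. -/
noncomputable def consistLoss {X : Type*} [MetricSpace X] [MeasurableSpace X]
    (μ : Measure X) (𝒯 : Set (X → X)) (r : ℝ) (G : X → ℝ) (δ : ℝ) : ℝ :=
  (μ (consistSet 𝒯 r G δ)ᶜ).toReal

/-- With `S₁ = S_B^m(G;δ) ∩ M(G_pl)` and `S₂ = S_B^m(G;δ) ∩ (X ∖ M(G_pl))`, where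
`M(G_pl) = {x | G_pl x ≠ G* x}`, we have
`L_m(G,G*|S₂) ≤ L_m(G,G*|S₁) + L_m(G,G_pl) − Err(G_pl) + R_B^m(G;δ)`,
where `L_m(G,H) = L_m(G,H|X)`, `Err(G_pl) = μ(M(G_pl))` and `R_B^m` is the marginal
consistency loss. -/
theorem subsetLoss_relation {X : Type*} [MetricSpace X] [MeasurableSpace X] [BorelSpace X]
    (μ : Measure X) [IsProbabilityMeasure μ] (𝒯 : Set (X → X)) (r : ℝ) (hr : 0 < r)
    (Gstar Gpl G : X → ℝ)
    (hGstar01 : ∀ x, Gstar x = 0 ∨ Gstar x = 1) (hGpl01 : ∀ x, Gpl x = 0 ∨ Gpl x = 1)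
    (hG01 : ∀ x, G x ∈ Icc (0 : ℝ) 1)
    (hGstar : Measurable Gstar) (hGpl : Measurable Gpl) (hG : Measurable G)
    (δ : ℝ) (hδ : δ ∈ Icc (0 : ℝ) 1)
    (hSB : MeasurableSet (consistSet 𝒯 r G δ)) :
    subsetLoss μ G Gstar (consistSet 𝒯 r G δ ∩ {x | Gpl x ≠ Gstar x}ᶜ) ≤
      subsetLoss μ G Gstar (consistSet 𝒯 r G δ ∩ {x | Gpl x ≠ Gstar x}) +
      subsetLoss μ G Gpl Set.univ - (μ {x | Gpl x ≠ Gstar x}).toReal +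
      consistLoss μ 𝒯 r G δ := by
  have hM : MeasurableSet {x | Gpl x ≠ Gstar x} := (measurableSet_eq_fun hGpl hGstar).compl
  have hint : ∀ H : X → ℝ, Measurable H → (∀ x, H x = 0 ∨ H x = 1) →
      Integrable (fun x => H x * (1 - G x) + (1 - H x) * G x) μ := by
    intro H hH hH01
    refine Integrable.of_bound (C := 1) (by fun_prop) (ae_of_all _ fun x => ?_)
    obtain ⟨h0, h1⟩ := hG01 x
    rw [Real.norm_eq_abs, abs_le]
    rcases hH01 x with h | h <;> rw [h] <;> constructor <;> linarith
  have hstar := hint Gstar hGstar hGstar01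
  have hpl := hint Gpl hGpl hGpl01
  unfold subsetLoss consistLoss
  generalize consistSet 𝒯 r G δ = S at hSB ⊢
  have hS₁ := hSB.inter hM
  have hS₂ := hSB.inter hM.compl
  -- Every term becomes the integral over all of `X` of an indicator function.
  rw [setIntegral_univ, ← integral_indicator hS₁, ← integral_indicator hS₂,
    ← Measure.real_def, ← Measure.real_def, ← integral_indicator_one hM,
    ← integral_indicator_one hSB.compl]
  have i₁ := hstar.indicator hS₁
  have i₂ := hstar.indicator hS₂
  have iM : Integrable ({x | Gpl x ≠ Gstar x}.indicator (1 : X → ℝ)) μ :=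
    (integrable_const (1 : ℝ)).indicator hM
  have iR : Integrable (Sᶜ.indicator (1 : X → ℝ)) μ :=
    (integrable_const (1 : ℝ)).indicator hSB.compl
  rw [← integral_add' i₁ hpl, ← integral_sub' (i₁.add hpl) iM,
    ← integral_add' ((i₁.add hpl).sub iM) iR]
  refine integral_mono i₂ (((i₁.add hpl).sub iM).add iR) fun x => ?_
  obtain ⟨h0, h1⟩ := hG01 x
  -- The four cells of the partition by `S` and `M(G_pl)`, for each pair of label values.
  by_cases hx : x ∈ S <;> rcases hGstar01 x with hs | hs <;> rcases hGpl01 x with hp | hp <;>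
    simp [indicator, hx, hs, hp] <;> linarith
end
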